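/- arXiv:2202.09349 — 2 statements merged into one kernel-verified Lean document; each statement's English description precedes it below -/
import Mathlib

section
/- Assume that n exists and that n ≤ m + 1 (in particular m ≥ 1). Then there exists a sequence c_0, c_1, …, c_{m|α|−1} of elements of ℤ^s with c_0 = β, with c_0 < c_1 < ⋯ < c_{m|α|−1} < β + mα (for the componentwise order as defined, where a < b means a ≤ b and a ≠ b), and such that c_i ∈ K° + K° for every i with 0 ≤ i ≤ m|α| − 1. -/
open Finset Pointwise

/-- Elements of `ℤ^s`, compared componentwise. -/
abbrev Vec (s : ℕ) := Fin s → ℤ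

/-- A good local semigroup `S ⊆ ℕ^s` (encoded as a set of nonnegative vectors of `ℤ^s`):
`0 ∈ S`, `S + S ⊆ S`, closure under componentwise minima (G1), property (G2),
existence of a conductor (G3), and locality (G4). -/
def GoodLocal {s : ℕ} (S : Set (Vec s)) : Prop :=
  (∀ a ∈ S, 0 ≤ a) ∧
  (0 : Vec s) ∈ S ∧
  (∀ a ∈ S, ∀ b ∈ S, a + b ∈ S) ∧
  (∀ a ∈ S, ∀ b ∈ S, a ⊓ b ∈ S) ∧
  (∀ a ∈ S, ∀ b ∈ S, ∀ i : Fin s, a i = b i →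
    ∃ ε ∈ S, a i < ε i ∧
      ∀ j : Fin s, j ≠ i → min (a j) (b j) ≤ ε j ∧ (a j ≠ b j → ε j = min (a j) (b j))) ∧
  (∃ c : Vec s, 0 ≤ c ∧ ∀ x : Vec s, 0 ≤ x → c + x ∈ S) ∧
  (∀ a ∈ S, (∃ i, a i = 0) → a = 0)

/-- `Δ^S(a) = {b ∈ S : b_i = a_i for some i, and b_j > a_j for all j ≠ i}`. -/
def Delta {s : ℕ} (S : Set (Vec s)) (a : Vec s) : Set (Vec s) :=
  {b ∈ S | ∃ i : Fin s, b i = a i ∧ ∀ j : Fin s, j ≠ i → a j < b j}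

/-- The canonical ideal `K = {a ∈ ℤ^s : Δ^S(γ - a) = ∅}` where `γ = β - (1,…,1)`. -/
def Kideal {s : ℕ} (S : Set (Vec s)) (β : Vec s) : Set (Vec s) :=
  {a : Vec s | Delta S (β - 1 - a) = ∅}

/-- `K° = {a ∈ K : a < β}`. -/
def Kcirc {s : ℕ} (S : Set (Vec s)) (β : Vec s) : Set (Vec s) :=
  {a ∈ Kideal S β | a < β}

/-- `R_i = {a ∈ ℕ^s : (i-1)α < a < iα}`. -/
def Rset {s : ℕ} (α : Vec s) (i : ℤ) : Set (Vec s) :=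
  {a : Vec s | 0 ≤ a ∧ (i - 1) • α < a ∧ a < i • α}

/-!
Choose an element of `S` strictly between `(n - 1) • α` and `n • α`, with `n` least, and a
coordinate `i` in which it differs from `n • α`. Every vector `β + q • α + x` with `0 ≤ q < m` and
`0 ≤ x ≤ α - e_i` is then a sum of two elements of `K°`. To see this, put `u = α - x`.
If `u` is not a unit vector, then `β - u ∈ K`, because an element of `S` is either `0` or at least
`α`, and the vector is `(q + 1) • α + (β - u)`, where `(q + 1) • α ∈ S ⊆ K`. The only unit vector
that can occur is `u = e_i`. In that case a translate of the chosen element of `S` by a multiple of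
`α` is used instead of `(q + 1) • α`, and the complementary summand lies in `K` because, by
minimality of `n`, elements of `S` not above `(n - 1) • α` are multiples of `α`.
Finally, a maximal chain of the box `[0, α - e_i]` has `|α|` elements, and its translates by
`0, α, …, (m - 1) • α` together form one chain.
-/

section Chains

theorem strictMono_div_smul_add_mod {G : Type*} [AddCommMonoid G] [PartialOrder G]
    [IsOrderedCancelAddMonoid G] {f : ℕ → G} {d : G} {N : ℕ}
    (hf : StrictMonoOn f (Set.Iic N)) (hd : f N < d + f 0) :
    StrictMono fun t ↦ (t / (N + 1)) • d + f (t % (N + 1)) := by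
  have hmod (t : ℕ) : t % (N + 1) ≤ N := Nat.lt_succ_iff.1 (Nat.mod_lt t N.succ_pos)
  have hd0 : 0 ≤ d := by
    have h0N : f 0 ≤ f N := hf.monotoneOn (Nat.zero_le N) Set.self_mem_Iic (Nat.zero_le N)
    exact (lt_add_iff_pos_left (f 0)).1 (h0N.trans_lt hd) |>.le
  intro a b hab
  rcases (Nat.div_le_div_right (c := N + 1) hab.le).lt_or_eq with hq | hq
  · calc (a / (N + 1)) • d + f (a % (N + 1))
        ≤ (a / (N + 1)) • d + f N := by
          gcongr
          exact hf.monotoneOn (hmod a) Set.self_mem_Iic (hmod a)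
      _ < (a / (N + 1)) • d + (d + f 0) := by gcongr
      _ = (a / (N + 1) + 1) • d + f 0 := by rw [succ_nsmul, add_assoc]
      _ ≤ (b / (N + 1)) • d + f (b % (N + 1)) :=
        add_le_add (nsmul_le_nsmul_left hd0 hq)
          (hf.monotoneOn (Nat.zero_le N) (hmod b) (Nat.zero_le _))
  · have hr : a % (N + 1) < b % (N + 1) := by
      have ha := Nat.div_add_mod a (N + 1)
      have hb := Nat.div_add_mod b (N + 1)
      rw [← hq] at hb
      omega
    simp only [hq]
    gcongr
    exact hf (hmod a) (hmod b) hr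

theorem exists_strictMono_eq_zero_eq {ι : Type*} [Fintype ι] [Nonempty ι] {v : ι → ℤ} (hv : 0 ≤ v)
    {N : ℕ} (hN : ∑ k, v k = N) : ∃ f : ℕ → ι → ℤ, StrictMono f ∧ f 0 = 0 ∧ f N = v := by
  classical
  induction N generalizing v with
  | zero =>
    have hv0 : v = 0 := (Fintype.sum_eq_zero_iff_of_nonneg hv).1 (by simpa using hN)
    refine ⟨fun t _ ↦ t, fun a b hab ↦ ?_, rfl, by rw [hv0]; rfl⟩
    exact Pi.lt_def.2 ⟨fun _ ↦ by simpa using hab.le, Classical.arbitrary ι, by simpa using hab⟩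
  | succ N ih =>
    obtain ⟨k, -, hk⟩ : ∃ k ∈ univ, 0 < v k := exists_lt_of_sum_lt (by simp [hN])
    have hvk : Pi.single k 1 ≤ v := update_le_iff.2 ⟨hk, fun l _ ↦ hv l⟩
    obtain ⟨f, hf, hf0, hfN⟩ := ih (v := v - Pi.single k 1) (sub_nonneg.2 hvk)
      (by simp [hN])
    refine ⟨fun t ↦ t.casesOn 0 fun t ↦ Pi.single k 1 + f t, strictMono_nat_of_lt_succ ?_,
      rfl, by simp [hfN]⟩
    rintro (_ | t)
    · simp [hf0]
    · exact add_lt_add_right (hf t.lt_succ_self) _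

theorem exists_strictMono_sub_ediv_smul_mem_Icc {ι : Type*} [Fintype ι] [DecidableEq ι]
    {α : ι → ℤ} {i : ι} (hi : Pi.single i 1 ≤ α) :
    ∃ g : ℕ → ι → ℤ, StrictMono g ∧ g 0 = 0 ∧
      ∀ t : ℕ, g t - (t / ∑ k, α k) • α ∈ Set.Icc 0 (α - Pi.single i 1) := by
  have : Nonempty ι := ⟨i⟩
  have hbox : 0 ≤ α - Pi.single i 1 := sub_nonneg.2 hi
  obtain ⟨N, hN⟩ := Int.eq_ofNat_of_zero_le (sum_nonneg fun k (_ : k ∈ univ) ↦ hbox k)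
  have hsum : ∑ k, α k = (N + 1 : ℕ) := by
    simp only [Pi.sub_apply, sum_sub_distrib, sum_pi_single', mem_univ, if_true,
      sub_eq_iff_eq_add] at hN
    rw [hN, Nat.cast_succ]
  obtain ⟨f, hf, hf0, hfN⟩ := exists_strictMono_eq_zero_eq hbox hN
  have hlast : f N < α + f 0 := by
    rw [hfN, hf0, add_zero]
    exact sub_lt_self _ (Pi.single_pos.2 one_pos)
  refine ⟨_, strictMono_div_smul_add_mod (hf.strictMonoOn _) hlast, by simp [hf0], fun t ↦ ?_⟩
  have hmod : t % (N + 1) ≤ N := Nat.lt_succ_iff.1 (Nat.mod_lt _ N.succ_pos)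
  have hdiv : ((t : ℤ) / ∑ k, α k) • α = (t / (N + 1)) • α := by
    rw [hsum, ← Int.natCast_div, natCast_zsmul]
  rw [hdiv, add_sub_cancel_left, ← hf0, ← hfN]
  exact ⟨hf.monotone (Nat.zero_le _), hf.monotone hmod⟩

end Chains

section GoodLocalSemigroups

variable {s : ℕ} {S : Set (Vec s)} {α β : Vec s}

namespace GoodLocal

theorem nonneg (hS : GoodLocal S) {a : Vec s} (ha : a ∈ S) : 0 ≤ a := hS.1 a ha

theorem add_mem (hS : GoodLocal S) {a b : Vec s} (ha : a ∈ S) (hb : b ∈ S) : a + b ∈ S :=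
  hS.2.2.1 a ha b hb

theorem inf_mem (hS : GoodLocal S) {a b : Vec s} (ha : a ∈ S) (hb : b ∈ S) : a ⊓ b ∈ S :=
  hS.2.2.2.1 a ha b hb

theorem zsmul_mem (hS : GoodLocal S) {a : Vec s} (ha : a ∈ S) {j : ℤ} (hj : 0 ≤ j) :
    j • a ∈ S := by
  lift j to ℕ using hj
  rw [natCast_zsmul]
  exact AddSubmonoid.nsmul_mem ⟨⟨S, hS.add_mem⟩, hS.2.1⟩ ha j

theorem pos_of_ne_zero (hS : GoodLocal S) {a : Vec s} (ha : a ∈ S) (ha0 : a ≠ 0) (i : Fin s) :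
    0 < a i :=
  (hS.nonneg ha i).lt_of_ne fun h ↦ ha0 (hS.2.2.2.2.2.2 a ha ⟨i, h.symm⟩)

theorem exists_mem_raise_coord (hS : GoodLocal S) (hβ : Set.Ici β ⊆ S) {b : Vec s} (hb : b ∈ S)
    {i k : Fin s} (hki : k ≠ i) (hi : b i < β i) (hk : β k ≤ b k) :
    ∃ ε ∈ S, b ≤ ε ∧ ε i = b i ∧ b k < ε k := by
  obtain ⟨ε, hε, hεk, hεne⟩ := hS.2.2.2.2.1 b hb (b ⊔ β) (hβ (Set.mem_Ici.2 le_sup_right)) k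
    (by simp [hk])
  have hle (j : Fin s) (hj : j ≠ k) : b j ≤ ε j := by simpa using (hεne j hj).1
  refine ⟨ε, hε, fun j ↦ ?_, ?_, hεk⟩
  · rcases eq_or_ne j k with rfl | hj
    exacts [hεk.le, hle j hj]
  · simpa using (hεne i hki.symm).2 (by simp [hi])

theorem exists_mem_ge_off_coord (hS : GoodLocal S) (hβ : Set.Ici β ⊆ S) {b : Vec s} (hb : b ∈ S)
    {i : Fin s} (hi : b i < β i) (hne : ∀ j ≠ i, β j ≤ b j) (x : Vec s) :
    ∃ ε ∈ S, ε i = b i ∧ ∀ j ≠ i, x j ≤ ε j := by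
  induction hd : ∑ j, (x j - b j).toNat using Nat.strong_induction_on generalizing b with
  | _ d ih =>
    by_cases hx : ∀ j ≠ i, x j ≤ b j
    · exact ⟨b, hb, rfl, hx⟩
    · push Not at hx
      obtain ⟨k, hki, hk⟩ := hx
      obtain ⟨ε, hε, hbε, hεi, hεk⟩ := hS.exists_mem_raise_coord hβ hb hki hi (hne k hki)
      have hlt : ∑ j, (x j - ε j).toNat < d := by
        rw [← hd]
        refine sum_lt_sum (fun j _ ↦ ?_) ⟨k, mem_univ k, by omega⟩
        have : b j ≤ ε j := hbε j
        omega
      rw [← hεi]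
      exact ih _ hlt hε (hεi ▸ hi) (fun j hj ↦ (hne j hj).trans (hbε j)) rfl

end GoodLocal

theorem sub_mem_Kideal_iff {u : Vec s} :
    β - u ∈ Kideal S β ↔ ∀ b ∈ S, ∀ k, b k = u k - 1 → ∃ l ≠ k, b l < u l := by
  simp [Kideal, Delta, Set.eq_empty_iff_forall_notMem]

theorem GoodLocal.add_mem_Kideal (hS : GoodLocal S) {a x : Vec s} (ha : a ∈ S)
    (hx : x ∈ Kideal S β) : a + x ∈ Kideal S β := by
  obtain ⟨u, rfl⟩ : ∃ u, x = β - u := ⟨β - x, by abel⟩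
  rw [show a + (β - u) = β - (u - a) by abel, sub_mem_Kideal_iff]
  intro b hb k hbk
  obtain ⟨l, hlk, hl⟩ := sub_mem_Kideal_iff.1 hx (a + b) (hS.add_mem ha hb) k
    (by rw [Pi.add_apply, hbk, Pi.sub_apply]; ring)
  exact ⟨l, hlk, lt_sub_iff_add_lt'.2 hl⟩

theorem GoodLocal.zero_mem_Kideal (hS : GoodLocal S) (hβ : IsLeast {c | Set.Ici c ⊆ S} β) :
    0 ∈ Kideal S β := by
  rw [← sub_self β, sub_mem_Kideal_iff]
  intro b hb i hbi
  by_contra! hne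
  -- Raise the coordinates of `b` other than `i`, then take minima with elements above `β`.
  have hconductor : Set.Ici (β - Pi.single i 1) ⊆ S := by
    intro x hx
    have hle (j : Fin s) (hj : j ≠ i) : β j ≤ x j := by simpa [hj] using hx j
    rcases le_or_gt (β i) (x i) with hxi | hxi
    · refine hβ.1 fun j ↦ ?_
      rcases eq_or_ne j i with rfl | hj
      exacts [hxi, hle j hj]
    · obtain ⟨ε, hε, hεi, hεx⟩ := hS.exists_mem_ge_off_coord hβ.1 hb (by omega) hne x
      have hinf : x = ε ⊓ (x ⊔ β) := by
        funext j
        rcases eq_or_ne j i with rfl | hj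
        · have hxj : β j - 1 ≤ x j := by simpa using hx j
          simp only [Pi.inf_apply, Pi.sup_apply]
          omega
        · simp [hεx j hj, hle j hj]
      rw [hinf]
      exact hS.inf_mem hε (hβ.1 (Set.mem_Ici.2 le_sup_right))
  simpa using hβ.2 hconductor i

theorem GoodLocal.subset_Kideal (hS : GoodLocal S) (hβ : IsLeast {c | Set.Ici c ⊆ S} β) :
    S ⊆ Kideal S β :=
  fun a ha ↦ add_zero a ▸ hS.add_mem_Kideal ha (hS.zero_mem_Kideal hβ)

theorem GoodLocal.add_sub_mem_Kcirc_add_Kcirc (hS : GoodLocal S)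
    (hβ : IsLeast {c | Set.Ici c ⊆ S} β) {y v : Vec s} (hy : y ∈ S) (hyβ : y < β)
    (hv : β - v ∈ Kideal S β) (hv0 : 0 < v) : y + (β - v) ∈ Kcirc S β + Kcirc S β :=
  Set.add_mem_add ⟨hS.subset_Kideal hβ hy, hyβ⟩ ⟨hv, sub_lt_self _ hv0⟩

theorem sub_mem_Kideal_of_ne_single (hα : α ∈ lowerBounds (S \ {0})) {u : Vec s} (hu0 : 0 ≤ u)
    (huα : u ≤ α) (hu : ∀ k, u ≠ Pi.single k 1) : β - u ∈ Kideal S β := by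
  rw [sub_mem_Kideal_iff]
  intro b hb k hbk
  by_contra! hne
  obtain rfl : b = 0 := by
    by_contra hb0
    have hαb : α k ≤ b k := hα ⟨hb, hb0⟩ k
    have : u k ≤ α k := huα k
    omega
  refine hu k (funext fun l ↦ ?_)
  rcases eq_or_ne l k with rfl | hl
  · rw [Pi.zero_apply] at hbk
    rw [Pi.single_eq_same]
    omega
  · rw [Pi.single_eq_of_ne hl]
    exact (hne l hl).antisymm (hu0 l)

theorem GoodLocal.one_lt_of_nonempty_Rset_inter (hS : GoodLocal S) (hα : IsLeast (S \ {0}) α)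
    {n : ℤ} (hn : (Rset α n ∩ S).Nonempty) : 1 < n := by
  obtain ⟨a, ⟨-, hna, han⟩, haS⟩ := hn
  have hα0 : 0 ≤ α := hS.nonneg hα.1.1
  by_contra! hn1
  have haα : a < α := han.trans_le (by simpa using zsmul_le_zsmul_left hα0 hn1)
  obtain rfl : a = 0 := by
    by_contra ha0
    exact haα.not_ge (hα.2 ⟨haS, ha0⟩)
  have hn0 : 0 < n := by
    by_contra! hn0
    exact han.not_ge (by simpa using zsmul_le_zsmul_left hα0 hn0)
  exact hna.not_ge (zsmul_nonneg hα0 (by omega))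

theorem GoodLocal.smul_le_or_eq_smul (hS : GoodLocal S) (hα : α ∈ S) (hα0 : α ≠ 0)
    {n : ℤ} (hgap : ∀ r < n, ¬(Rset α r ∩ S).Nonempty) {r : ℤ} (hr0 : 0 ≤ r)
    (hrn : r < n) {b : Vec s} (hb : b ∈ S) : r • α ≤ b ∨ ∃ j : ℤ, b = j • α := by
  induction r, hr0 using Int.leInduction with
  | base => exact .inl (by simpa using hS.nonneg hb)
  | succ r hr0 ih =>
    refine (ih (by omega)).elim (fun hle ↦ ?_) .inr
    rcases hle.eq_or_lt with heq | hlt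
    · exact .inr ⟨r, heq.symm⟩
    refine .inl (by_contra fun hnot ↦ hgap _ hrn ⟨b ⊓ (r + 1) • α, ?_, ?_⟩)
    · have hαS := hS.zsmul_mem hα (by omega : 0 ≤ r + 1)
      have hstep (k : Fin s) : (r • α) k < ((r + 1) • α) k := by
        have := hS.pos_of_ne_zero hα hα0 k
        simp only [Pi.smul_apply, smul_eq_mul]
        linarith
      obtain ⟨-, l, hl⟩ := Pi.lt_def.1 hlt
      refine ⟨le_inf (hS.nonneg hb) (hS.nonneg hαS), ?_, inf_lt_right.2 hnot⟩
      rw [add_sub_cancel_right]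
      exact Pi.lt_def.2 ⟨le_inf hle fun k ↦ (hstep k).le, l, lt_inf_iff.2 ⟨hl, hstep l⟩⟩
    · exact hS.inf_mem hb (hS.zsmul_mem hα (by omega))

theorem GoodLocal.sub_add_single_mem_Kideal (hS : GoodLocal S) (hα : α ∈ S) (hα0 : α ≠ 0)
    {n : ℤ} (hgap : ∀ r < n, ¬(Rset α r ∩ S).Nonempty) {r : ℤ} (hr0 : 0 ≤ r)
    (hrn : r < n) {w : Vec s} (hw : (r - 1) • α < w) (hwr : w ≤ r • α)
    {i : Fin s} (hi : w i < (r • α) i) :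
    β - (w + Pi.single i 1) ∈ Kideal S β := by
  rw [sub_mem_Kideal_iff]
  intro b hb k hbk
  by_contra! hne
  have hbr : b k < (r • α) k := by
    rcases eq_or_ne k i with rfl | hki
    · simpa [hbk] using hi
    · have hwk : w k ≤ (r • α) k := hwr k
      simp only [Pi.add_apply, Pi.single_eq_of_ne hki] at hbk
      omega
  obtain ⟨j, rfl⟩ := (hS.smul_le_or_eq_smul hα hα0 hgap hr0 hrn hb).resolve_left
    fun h ↦ (h k).not_gt hbr
  have hjr : j • α ≤ (r - 1) • α := by
    refine zsmul_le_zsmul_left (hS.nonneg hα) (Int.le_sub_one_of_lt ?_)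
    exact lt_of_mul_lt_mul_right hbr (hS.nonneg hα k)
  rcases eq_or_ne k i with rfl | hki
  · refine (hjr.trans_lt hw).not_ge fun l ↦ ?_
    rcases eq_or_ne l k with rfl | hl
    · simp [hbk]
    · simpa [hl] using hne l hl
  · have hlt : w i < (j • α) i := by simpa using hne i hki.symm
    exact hlt.not_ge ((hjr i).trans (hw.le i))

theorem GoodLocal.add_mem_Kcirc_add_Kcirc_of_sub_ne_single (hS : GoodLocal S)
    (hα : IsLeast (S \ {0}) α) (hβ : IsLeast {c | Set.Ici c ⊆ S} β) {q : ℤ} (hq : 0 ≤ q)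
    (hqβ : (q + 1) • α < β) {x : Vec s} (hx0 : 0 ≤ x) (hxα : x < α)
    (hx : ∀ k, α - x ≠ Pi.single k 1) : β + (q • α + x) ∈ Kcirc S β + Kcirc S β := by
  rw [show β + (q • α + x) = (q + 1) • α + (β - (α - x)) by module]
  exact hS.add_sub_mem_Kcirc_add_Kcirc hβ (hS.zsmul_mem hα.1.1 (by omega)) hqβ
    (sub_mem_Kideal_of_ne_single hα.2 (sub_nonneg.2 hxα.le) (sub_le_self _ hx0) hx)
    (sub_pos.2 hxα)

theorem GoodLocal.add_sub_single_mem_Kcirc_add_Kcirc (hS : GoodLocal S) (hα : IsLeast (S \ {0}) α)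
    (hβ : IsLeast {c | Set.Ici c ⊆ S} β) {n q : ℤ} (hgap : ∀ r < n, ¬(Rset α r ∩ S).Nonempty)
    (hnβ : n • α ≤ β) (hq : 0 ≤ q) (hqβ : (q + 2) • α ≤ β) {a : Vec s} (ha : a ∈ Rset α n ∩ S)
    {i : Fin s} (hi : a i < (n • α) i) :
    β + (q • α + (α - Pi.single i 1)) ∈ Kcirc S β + Kcirc S β := by
  have hn1 : 1 < n := hS.one_lt_of_nonempty_Rset_inter hα ⟨a, ha⟩
  obtain ⟨⟨-, hna, han⟩, haS⟩ := ha
  -- `r` is the least positive integer for which `a + (q + 1 + r - n) • α` lies in `a + S`.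
  obtain ⟨r, hr1, hrn, hqr, hrβ⟩ : ∃ r : ℤ, 1 ≤ r ∧ r < n ∧ n ≤ q + 1 + r ∧
      (q + 1 + r) • α ≤ β := by
    rcases le_total n (q + 2) with h | h
    · exact ⟨1, le_rfl, hn1, by omega, by rwa [show q + 1 + 1 = q + 2 by ring]⟩
    · exact ⟨n - q - 1, by omega, by omega, by omega, by rwa [show q + 1 + (n - q - 1) = n by ring]⟩
  obtain ⟨w, rfl⟩ : ∃ w, a = w + (n - r) • α := ⟨a - (n - r) • α, by abel⟩
  have hw : (r - 1) • α < w := by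
    rwa [show (n - 1) • α = (r - 1) • α + (n - r) • α by module, add_lt_add_iff_right] at hna
  have hwr : w < r • α := by
    rwa [show n • α = r • α + (n - r) • α by module, add_lt_add_iff_right] at han
  have hwi : w i < (r • α) i := by
    rw [show n • α = r • α + (n - r) • α by module] at hi
    exact lt_of_add_lt_add_right hi
  have hyS : w + (q + 1) • α ∈ S := by
    rw [show w + (q + 1) • α = w + (n - r) • α + (q + 1 + r - n) • α by module]
    exact hS.add_mem haS (hS.zsmul_mem hα.1.1 (by omega))
  have hyβ : w + (q + 1) • α < β := by
    refine lt_of_lt_of_le ?_ hrβ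
    rw [show (q + 1 + r) • α = r • α + (q + 1) • α by module]
    gcongr
  have hw0 : 0 < w + Pi.single i 1 :=
    ((zsmul_nonneg (hS.nonneg hα.1.1) (by omega)).trans_lt hw).trans
      (lt_add_of_pos_right _ (Pi.single_pos.2 one_pos))
  rw [show β + (q • α + (α - Pi.single i 1)) =
    w + (q + 1) • α + (β - (w + Pi.single i 1)) by module]
  exact hS.add_sub_mem_Kcirc_add_Kcirc hβ hyS hyβ
    (hS.sub_add_single_mem_Kideal hα.1.1 hα.1.2 hgap (by omega) hrn hw hwr.le hwi) hw0

theorem GoodLocal.exists_forall_mem_Icc_add_mem_Kcirc_add_Kcirc (hS : GoodLocal S)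
    (hα : IsLeast (S \ {0}) α) (hβ : IsLeast {c | Set.Ici c ⊆ S} β) {m n : ℤ}
    (hm : (m + 1) • α ≤ β) (hn : (Rset α n ∩ S).Nonempty) (hnm : n ≤ m + 1) :
    ∃ i, ∀ q : ℤ, 0 ≤ q → q < m → ∀ x ∈ Set.Icc 0 (α - Pi.single i 1),
      β + (q • α + x) ∈ Kcirc S β + Kcirc S β := by
  have hα0 : 0 ≤ α := hS.nonneg hα.1.1
  obtain ⟨n₀, ⟨a, ha⟩, hmin⟩ := Int.exists_least_of_bdd (P := fun n ↦ (Rset α n ∩ S).Nonempty)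
    ⟨1, fun _ h ↦ (hS.one_lt_of_nonempty_Rset_inter hα h).le⟩ ⟨n, hn⟩
  have hgap (r : ℤ) (hr : r < n₀) : ¬(Rset α r ∩ S).Nonempty := fun h ↦ (hmin r h).not_gt hr
  have hle (j : ℤ) (hj : j ≤ m + 1) : j • α ≤ β := (zsmul_le_zsmul_left hα0 hj).trans hm
  obtain ⟨-, i, hi⟩ := Pi.lt_def.1 ha.1.2.2
  refine ⟨i, fun q hq hqm x ⟨hx0, hxα⟩ ↦ ?_⟩
  rcases hxα.eq_or_lt with rfl | hlt
  · exact hS.add_sub_single_mem_Kcirc_add_Kcirc hα hβ hgap (hle n₀ ((hmin n hn).trans hnm)) hq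
      (hle _ (by omega)) ha hi
  · have hqβ : (q + 1) • α < β := by
      refine (zsmul_lt_zsmul_left ?_ (lt_add_one _)).trans_le (hle _ (by omega))
      exact hα0.lt_of_ne' hα.1.2
    refine hS.add_mem_Kcirc_add_Kcirc_of_sub_ne_single hα hβ hq hqβ hx0
      (hxα.trans_lt (sub_lt_self _ (Pi.single_pos.2 one_pos))) fun k hk ↦ ?_
    have hik : Pi.single i 1 < (Pi.single k 1 : Vec s) := hk ▸ lt_sub_comm.1 hlt
    rcases eq_or_ne i k with rfl | hne
    · exact hik.false
    · simpa [hne] using hik.le i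

theorem GoodLocal.isLeast_setOf_Ici_subset (hS : GoodLocal S) (hβ : ∀ x : Vec s, 0 ≤ x → β + x ∈ S)
    (hmin : ∀ c : Vec s, 0 ≤ c → (∀ x : Vec s, 0 ≤ x → c + x ∈ S) → β ≤ c) :
    IsLeast {c | Set.Ici c ⊆ S} β := by
  refine ⟨fun x hx ↦ ?_, fun c hc ↦ hmin c (hS.nonneg (hc Set.self_mem_Ici)) fun x hx ↦
    hc (Set.mem_Ici.2 (le_add_of_nonneg_right hx))⟩
  simpa using hβ (x - β) (sub_nonneg.2 hx)

theorem max_noether_seq_part_I_general (hS : GoodLocal S) (hα : IsLeast (S \ {0}) α)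
    (hβ : IsLeast {c | Set.Ici c ⊆ S} β) {m n : ℤ} (hm : (m + 1) • α ≤ β)
    (hn : (Rset α n ∩ S).Nonempty) (hnm : n ≤ m + 1) :
    ∃ c : ℕ → Vec s, c 0 = β ∧ StrictMono c ∧ ∀ i : ℕ, (i : ℤ) < m * ∑ t, α t →
      c i ∈ Kcirc S β + Kcirc S β ∧ c i < β + m • α := by
  obtain ⟨k, hk⟩ := hS.exists_forall_mem_Icc_add_mem_Kcirc_add_Kcirc hα hβ hm hn hnm
  have hpos := hS.pos_of_ne_zero hα.1.1 hα.1.2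
  have hkα : Pi.single k 1 ≤ α := update_le_iff.2 ⟨hpos k, fun l _ ↦ (hpos l).le⟩
  obtain ⟨g, hg, hg0, hgα⟩ := exists_strictMono_sub_ediv_smul_mem_Icc hkα
  refine ⟨fun t ↦ β + g t, by simp [hg0], hg.const_add β, fun t ht ↦ ?_⟩
  have hsum : 0 < ∑ t, α t := sum_pos (fun t _ ↦ hpos t) ⟨k, mem_univ k⟩
  set q : ℤ := t / ∑ k, α k
  have hq0 : 0 ≤ q := Int.ediv_nonneg (Int.natCast_nonneg t) hsum.le
  have hqm : q < m := Int.ediv_lt_of_lt_mul hsum ht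
  constructor
  · dsimp only
    rw [← add_sub_cancel (q • α) (g t)]
    exact hk q hq0 hqm _ (hgα t)
  · refine add_lt_add_right ?_ β
    calc g t ≤ q • α + (α - Pi.single k 1) := sub_le_iff_le_add'.1 (hgα t).2
      _ < q • α + α := by gcongr; exact sub_lt_self _ (Pi.single_pos.2 one_pos)
      _ = (q + 1) • α := by rw [add_smul, one_smul]
      _ ≤ m • α := zsmul_le_zsmul_left (hS.nonneg hα.1.1) hqm

end GoodLocalSemigroups

/-- Lemma 3.2 (Lemma "maismaroto"): there is a strictly increasing sequence
`β = c₀ < c₁ < … < c_{m|α|-1} < β + mα` with every `cᵢ ∈ K° + K°`. -/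
theorem max_noether_seq_part_I
    (s : ℕ) (hs : 1 ≤ s) (S : Set (Vec s)) (hS : GoodLocal S)
    (hSne : S ≠ {a : Vec s | 0 ≤ a}) (α β : Vec s)
    (hα₁ : α ∈ S) (hα₂ : α ≠ 0) (hα₃ : ∀ a ∈ S, a ≠ 0 → α ≤ a)
    (hβ₁ : 0 ≤ β) (hβ₂ : ∀ x : Vec s, 0 ≤ x → β + x ∈ S)
    (hβ₃ : ∀ c : Vec s, 0 ≤ c → (∀ x : Vec s, 0 ≤ x → c + x ∈ S) → β ≤ c)
    (m : ℤ) (hm₁ : (m + 1) • α ≤ β) (hm₂ : ∀ m' : ℤ, (m' + 1) • α ≤ β → m' ≤ m)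
    (n : ℤ) (hn₁ : 1 ≤ n) (hn₂ : (Rset α n ∩ S).Nonempty)
    (hn₃ : ∀ n' : ℤ, 1 ≤ n' → (Rset α n' ∩ S).Nonempty → n ≤ n')
    (hnm : n ≤ m + 1) :
    ∃ c : ℕ → Vec s, c 0 = β ∧
      (∀ i j : ℕ, i < j → (j : ℤ) < m * (∑ t, α t) → c i < c j) ∧
      ∀ i : ℕ, (i : ℤ) < m * (∑ t, α t) →
        c i ∈ Kcirc S β + Kcirc S β ∧ c i < β + m • α := by
  obtain ⟨c, hc0, hc, hcK⟩ := max_noether_seq_part_I_general hS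
    ⟨⟨hα₁, hα₂⟩, fun a ha ↦ hα₃ a ha.1 ha.2⟩ (hS.isLeast_setOf_Ici_subset hβ₂ hβ₃) hm₁ hn₂ hnm
  exact ⟨c, hc0, fun _ _ hij _ ↦ hc hij, hcK⟩
end

section
/- Assume that n exists and that n ≤ m + 1, and set N := |β − α| (note N ≥ 1). Then there exists a sequence a_1, a_2, …, a_N of elements of ℤ^s with a_1 = β, with a_1 < a_2 < ⋯ < a_N < 2β − α (for the componentwise order as defined, where a < b means a ≤ b and a ≠ b), and such that a_i ∈ K° + K° for every i with 1 ≤ i ≤ N. -/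
open Finset Pointwise

/-!
Reflecting at `β` turns `K°` into the set `G` of all `U > 0` with `Δ^S(U - 1) = ∅`, so one has to
climb from `α` to `β` by unit steps inside `G + G`. Write `n = p + 2`.

* Below `(p + 1)α` the semigroup consists of multiples of `α`. Hence `jα + D ∈ G` whenever `j ≤ p`,
  `0 ≤ D ≤ α` and `|D| ≥ 2`. With `j = 0` this shows that for `U ∈ G` every point of the box
  `[U, U + α]` lies in `G + G`, except possibly `U` and its upper neighbours `U + e_i`. Crossing the
  box from `U` thus only needs one direction `i` with `U + e_i ∈ G + G`.
* For `U = jα` with `1 ≤ j ≤ p + 1` this direction comes from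
  `jα + e_i = ((j - 1)α + (α - e_l)) + (e_i + e_l)`. Here `|α| ≥ 3` is needed; it holds by parity,
  since for `|α| = 2` all `W ≥ 0` with `Δ^S(W - 1) = ∅` have even `|W|`.
* Above `(p + 2)α` the boxes start at `(p + 1)α ⊔ (β - kα)` for `k ≥ 1`. Each of them is entered
  beyond its starting corner, unless that corner is `β - kα ≥ (p + 2)α`; then an element
  `y ∈ R_n ∩ S` provides the direction: `β - kα + e_i = (y - α + e_i) + (β - (k - 1)α - y)`.
-/

section CovByPath

variable {P : Type*}

/-- Saturated chains from one element of an order to another, all of whose elements except possibly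
the first lie in `X`. -/
def CovByPath [Preorder P] (X : Set P) : P → P → Prop :=
  Relation.ReflTransGen fun a b => a ⋖ b ∧ b ∈ X

lemma CovByPath.of_Ioc_subset [PartialOrder P] [LocallyFiniteOrder P] {X : Set P} {a b : P}
    (hab : a ≤ b) (hX : Set.Ioc a b ⊆ X) : CovByPath X a b := by
  induction le_iff_reflTransGen_covBy.1 hab with
  | refl => exact .refl
  | @tail c d hac hcd ih =>
    have hac : a ≤ c := le_iff_reflTransGen_covBy.2 hac
    refine (ih hac ((Set.Ioc_subset_Ioc_right hcd.le).trans hX)).tail ⟨hcd, hX ⟨?_, le_rfl⟩⟩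
    exact hac.trans_lt hcd.lt

end CovByPath

section Vec

variable {s : ℕ} {A B : Vec s}

lemma covBy_add_single (A : Vec s) (i : Fin s) : A ⋖ A + Pi.single i 1 :=
  Pi.covBy_iff.2 ⟨i, by simp, fun j hj => by simp [hj]⟩

lemma add_single_le_of_apply_lt (h : A ≤ B) {i : Fin s} (hi : A i < B i) :
    A + Pi.single i 1 ≤ B := by
  intro t
  rcases eq_or_ne t i with rfl | hti
  · simpa using hi
  · simpa [hti] using h t

lemma sum_add_single (A : Vec s) (i : Fin s) :
    ∑ t, (A + Pi.single i 1 : Vec s) t = ∑ t, A t + 1 := by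
  simp [Finset.sum_add_distrib]

lemma sum_lt_sum_of_lt (h : A < B) : ∑ t, A t < ∑ t, B t :=
  Fintype.sum_strictMono h

lemma sum_eq_sum_add_one_of_covBy (h : A ⋖ B) : ∑ t, B t = ∑ t, A t + 1 := by
  obtain ⟨i, hi⟩ := (Pi.lt_def.1 h.lt).2
  have hB : A + Pi.single i 1 = B :=
    (add_single_le_of_apply_lt h.le hi).eq_of_not_lt (h.2 (covBy_add_single A i).lt)
  rw [← hB, sum_add_single]

lemma exists_le_nsmul (hpos : ∀ t, 0 < A t) (B : Vec s) : ∃ k : ℕ, B ≤ k • A := by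
  refine ⟨∑ t, (B t).toNat, fun t => ?_⟩
  have hle : (B t).toNat ≤ ∑ t, (B t).toNat :=
    Finset.single_le_sum (f := fun t => (B t).toNat) (fun _ _ => Nat.zero_le _) (Finset.mem_univ t)
  calc B t ≤ (B t).toNat := Int.self_le_toNat _
    _ ≤ ((∑ t, (B t).toNat : ℕ) : ℤ) := by exact_mod_cast hle
    _ ≤ ((∑ t, (B t).toNat) • A) t := by
      rw [Pi.smul_apply, nsmul_eq_mul]
      exact le_mul_of_one_le_right (Int.natCast_nonneg _) (hpos t)

lemma CovByPath.exists_strictMonoOn {X : Set (Vec s)} (h : CovByPath X A B) :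
    ∃ (N : ℕ) (f : ℕ → Vec s), f 0 = A ∧ f N = B ∧ ∑ t, B t = ∑ t, A t + N ∧
      StrictMonoOn f (Set.Iic N) ∧ ∀ k, 0 < k → k ≤ N → f k ∈ X := by
  induction h with
  | refl => exact ⟨0, fun _ => A, rfl, rfl, by simp, by simp [StrictMonoOn], by omega⟩
  | @tail C D _ hCD ih =>
    obtain ⟨N, f, hf0, hfN, hsum, hmono, hmem⟩ := ih
    obtain ⟨hcov, hD⟩ := hCD
    refine ⟨N + 1, fun k => if k ≤ N then f k else D, by simp [hf0], by simp, ?_, ?_, ?_⟩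
    · rw [sum_eq_sum_add_one_of_covBy hcov, hsum]
      push_cast
      ring
    · refine strictMonoOn_Iic_of_lt_succ fun k hk => ?_
      rcases (Nat.lt_succ_iff.1 hk).lt_or_eq with hkN | rfl
      · simpa [hkN.le, hkN] using
          hmono hkN.le (Nat.succ_le_of_lt hkN) (Nat.lt_succ_self k)
      · simpa [hfN] using hcov.lt
    · intro k hk0 _
      by_cases hk : k ≤ N
      · simpa [hk] using hmem k hk0 hk
      · simpa [hk] using hD

end Vec

section ShiftedGaps

variable {s : ℕ}

lemma Delta_sub_one_eq_empty_iff {S : Set (Vec s)} {U : Vec s} :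
    Delta S (U - 1) = ∅ ↔ ∀ b ∈ S, ∀ i, b i = U i - 1 → ∃ j ≠ i, b j < U j := by
  simp [Set.eq_empty_iff_forall_notMem, Delta]

lemma Delta_sup_sub_one_eq_empty {S : Set (Vec s)} {U V : Vec s} (hU : Delta S (U - 1) = ∅)
    (hV : Delta S (V - 1) = ∅) : Delta S (U ⊔ V - 1) = ∅ := by
  rw [Delta_sub_one_eq_empty_iff] at *
  intro b hb i hi
  rcases max_choice (U i) (V i) with h | h
  · obtain ⟨j, hji, hj⟩ := hU b hb i (by rw [hi, Pi.sup_apply, h])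
    exact ⟨j, hji, lt_sup_of_lt_left hj⟩
  · obtain ⟨j, hji, hj⟩ := hV b hb i (by rw [hi, Pi.sup_apply, h])
    exact ⟨j, hji, lt_sup_of_lt_right hj⟩

lemma Delta_sub_sub_one_eq_empty {S : AddSubmonoid (Vec s)} {U c : Vec s}
    (hU : Delta (S : Set (Vec s)) (U - 1) = ∅) (hc : c ∈ S) :
    Delta (S : Set (Vec s)) (U - c - 1) = ∅ := by
  rw [Delta_sub_one_eq_empty_iff] at *
  intro b hb i hi
  obtain ⟨j, hji, hj⟩ := hU (b + c) (S.add_mem hb hc) i (by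
    rw [Pi.add_apply, hi, Pi.sub_apply]; ring)
  exact ⟨j, hji, lt_sub_iff_add_lt.2 hj⟩

/-- The reflection `{U | β - U ∈ K°}` of `K°`, which does not depend on `β`. For `s = 1` its
elements are the successors of the gaps of `S`. -/
def shiftedGaps (S : Set (Vec s)) : Set (Vec s) :=
  {U | 0 < U ∧ Delta S (U - 1) = ∅}

lemma sub_mem_Kcirc_iff {S : Set (Vec s)} {β U : Vec s} :
    β - U ∈ Kcirc S β ↔ U ∈ shiftedGaps S := by
  have hU : β - 1 - (β - U) = U - 1 := by abel
  simp [Kcirc, Kideal, shiftedGaps, hU, and_comm]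

lemma two_smul_sub_mem_Kcirc_add_Kcirc {S : Set (Vec s)} {β T : Vec s}
    (hT : T ∈ shiftedGaps S + shiftedGaps S) : (2 : ℤ) • β - T ∈ Kcirc S β + Kcirc S β := by
  obtain ⟨U, hU, V, hV, rfl⟩ := Set.mem_add.1 hT
  refine Set.mem_add.2 ⟨β - U, sub_mem_Kcirc_iff.2 hU, β - V, sub_mem_Kcirc_iff.2 hV, ?_⟩
  rw [two_smul]
  abel

lemma sup_mem_shiftedGaps {S : Set (Vec s)} {U V : Vec s} (hU : U ∈ shiftedGaps S)
    (hV : Delta S (V - 1) = ∅) : U ⊔ V ∈ shiftedGaps S :=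
  ⟨hU.1.trans_le le_sup_left, Delta_sup_sub_one_eq_empty hU.2 hV⟩

lemma sub_mem_shiftedGaps {S : AddSubmonoid (Vec s)} {U c : Vec s}
    (hU : Delta (S : Set (Vec s)) (U - 1) = ∅) (hc : c ∈ S) (hcU : c < U) :
    U - c ∈ shiftedGaps (S : Set (Vec s)) :=
  ⟨sub_pos.2 hcU, Delta_sub_sub_one_eq_empty hU hc⟩

lemma CovByPath.exists_seq_Kcirc_add_Kcirc {S : Set (Vec s)} {α β : Vec s}
    (h : CovByPath (shiftedGaps S + shiftedGaps S) α β) :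
    ∃ a : ℕ → Vec s, a 1 = β ∧
      (∀ i j : ℕ, 1 ≤ i → i < j → (j : ℤ) ≤ ∑ t, (β t - α t) → a i < a j) ∧
      ∀ i : ℕ, 1 ≤ i → (i : ℤ) ≤ ∑ t, (β t - α t) →
        a i ∈ Kcirc S β + Kcirc S β ∧ a i < (2 : ℤ) • β - α := by
  obtain ⟨N, f, hf0, hfN, hsum, hmono, hmem⟩ := h.exists_strictMonoOn
  have hN : ∑ t, (β t - α t) = N := by rw [Finset.sum_sub_distrib, hsum]; ring
  have hlt : ∀ {k l}, k < l → l ≤ N → f k < f l := fun hkl hl => hmono (hkl.le.trans hl) hl hkl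
  rw [hN]
  refine ⟨fun i => (2 : ℤ) • β - f (N + 1 - i), ?_, ?_, ?_⟩
  · simp only [Nat.add_sub_cancel, hfN, two_smul, add_sub_cancel_right]
  · intro i j hi hij hj
    exact sub_lt_sub_left (hlt (by omega) (by omega)) _
  · intro i hi hiN
    refine ⟨two_smul_sub_mem_Kcirc_add_Kcirc (hmem _ (by omega) (by omega)), ?_⟩
    rw [← hf0]
    exact sub_lt_sub_left (hlt (by omega) (by omega)) _

end ShiftedGaps

section MultiplesBelow

variable {s p : ℕ} {S : AddSubmonoid (Vec s)} {α : Vec s}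

/-- Every element of `S` that is not at least `p • α` is a multiple of `α`. For the multiplicity
`α` this encodes that `S` avoids the regions `R_1, …, R_p`. -/
def MultiplesBelow (S : AddSubmonoid (Vec s)) (α : Vec s) (p : ℕ) : Prop :=
  ∀ b ∈ S, (∃ q : ℕ, b = q • α) ∨ p • α ≤ b

lemma multiplesBelow_of_forall_notMem_Ioo (hnonneg : ∀ a ∈ S, 0 ≤ a)
    (hinf : InfClosed (S : Set (Vec s))) (hα : α ∈ S) (hpos : ∀ t, 0 < α t)
    (hfree : ∀ q < p, ∀ b ∈ S, b ∉ Set.Ioo (q • α) ((q + 1) • α)) : MultiplesBelow S α p := by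
  intro b hb
  induction p with
  | zero => exact .inr (by simpa using hnonneg b hb)
  | succ p ih =>
    refine (ih fun q hq => hfree q (by omega)).elim .inl fun hpb => ?_
    have hp : p • α ≤ (p + 1) • α := nsmul_le_nsmul_left (hnonneg α hα) p.le_succ
    have hnotMem := hfree p p.lt_succ_self _ (hinf hb (S.nsmul_mem hα (p + 1)))
    rcases (le_inf hpb hp).eq_or_lt with heq | hlt
    · refine .inl ⟨p, funext fun t => ?_⟩
      have hmin : (p • α) t = min (b t) ((p • α) t + α t) := by
        simpa [succ_nsmul, add_mul] using congrFun heq t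
      have := hpos t
      omega
    · have hge : ¬ b ⊓ (p + 1) • α < (p + 1) • α := fun h => hnotMem ⟨hlt, h⟩
      exact .inr (inf_eq_right.1 (inf_le_right.eq_of_not_lt hge))

lemma MultiplesBelow.nsmul_add_mem_shiftedGaps (hS : MultiplesBelow S α p)
    (hpos : ∀ t, 0 < α t) {j : ℕ} (hj : j < p) {D : Vec s} (hD₀ : 0 ≤ D) (hD₁ : D ≤ α)
    (hD₂ : 2 ≤ ∑ t, D t) : j • α + D ∈ shiftedGaps (S : Set (Vec s)) := by
  have hα₀ : 0 ≤ α := fun t => (hpos t).le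
  have hD_pos : 0 < D := hD₀.lt_of_ne <| by rintro rfl; simp at hD₂
  refine ⟨add_pos_of_nonneg_of_pos (nsmul_nonneg hα₀ j) hD_pos,
    Delta_sub_one_eq_empty_iff.2 fun b hb i hi => ?_⟩
  by_contra! hle
  rw [Pi.add_apply] at hi
  have hbi : b i < ((j + 1) • α) i := by
    have hDi : D i ≤ α i := hD₁ i
    rw [succ_nsmul, Pi.add_apply]
    omega
  rcases hS b hb with ⟨q, rfl⟩ | hpb
  · have hqj : q ≤ j := by
      by_contra! hlt
      exact hbi.not_ge (nsmul_le_nsmul_left hα₀ (Nat.succ_le_of_lt hlt) i)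
    have hD : D ≤ Pi.single i 1 := Pi.le_def.2 fun t => by
      have hqjt : (q • α) t ≤ (j • α) t := nsmul_le_nsmul_left hα₀ hqj t
      rcases eq_or_ne t i with rfl | hti
      · rw [Pi.single_eq_same]
        omega
      · have := hle t hti
        rw [Pi.add_apply] at this
        rw [Pi.single_eq_of_ne hti]
        omega
    have := Finset.sum_le_sum fun t (_ : t ∈ Finset.univ) => hD t
    simp only [Finset.sum_pi_single', Finset.mem_univ, if_true] at this
    omega
  · exact hbi.not_ge ((nsmul_le_nsmul_left hα₀ hj).trans hpb i)

lemma MultiplesBelow.succ_nsmul_mem_shiftedGaps (hS : MultiplesBelow S α p)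
    (hpos : ∀ t, 0 < α t) (hα₂ : 2 ≤ ∑ t, α t) {j : ℕ} (hj : j < p) :
    (j + 1) • α ∈ shiftedGaps (S : Set (Vec s)) := by
  rw [succ_nsmul]
  exact hS.nsmul_add_mem_shiftedGaps hpos hj (fun t => (hpos t).le) le_rfl hα₂

end MultiplesBelow

section Boxes

variable {s p : ℕ} {S : AddSubmonoid (Vec s)} {α : Vec s}

local notation "G" => shiftedGaps (S : Set (Vec s))

lemma MultiplesBelow.covByPath_of_lt (hS : MultiplesBelow S α p) (hpos : ∀ t, 0 < α t)
    (hp : 0 < p) {U A B : Vec s} (hU : U ∈ G) (hUA : U < A) (hAB : A ≤ B) (hB : B ≤ U + α) :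
    CovByPath (G + G) A B := by
  refine .of_Ioc_subset hAB fun T hT => Set.mem_add.2 ⟨U, hU, T - U, ?_, add_sub_cancel U T⟩
  have hsum : 2 ≤ ∑ t, (T - U) t := by
    have := sum_lt_sum_of_lt hUA
    have := sum_lt_sum_of_lt hT.1
    simp only [Pi.sub_apply, Finset.sum_sub_distrib]
    omega
  simpa using hS.nsmul_add_mem_shiftedGaps hpos hp (sub_nonneg.2 (hUA.trans hT.1).le)
    (sub_le_iff_le_add'.2 (hT.2.trans hB)) hsum

lemma MultiplesBelow.covByPath_add (hS : MultiplesBelow S α p) (hpos : ∀ t, 0 < α t)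
    (hp : 0 < p) {U : Vec s} (hU : U ∈ G) {i : Fin s} (hi : U + Pi.single i 1 ∈ G + G) :
    CovByPath (G + G) U (U + α) := by
  have hcov := covBy_add_single U i
  refine .head ⟨hcov, hi⟩ (hS.covByPath_of_lt hpos hp hU hcov.lt ?_ le_rfl)
  exact add_single_le_of_apply_lt (le_add_of_nonneg_right fun t => (hpos t).le)
    (lt_add_of_pos_right _ (hpos i))

lemma MultiplesBelow.exists_succ_nsmul_add_single_mem (hS : MultiplesBelow S α p)
    (hpos : ∀ t, 0 < α t) (hα₃ : 3 ≤ ∑ t, α t) {j : ℕ} (hj : j < p) :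
    ∃ i, (j + 1) • α + Pi.single i 1 ∈ G + G := by
  have hα₀ : 0 ≤ α := fun t => (hpos t).le
  have hne : (0 : Vec s) ≠ α := by rintro rfl; simp at hα₃
  obtain ⟨i, hi⟩ := (Pi.lt_def.1 (hα₀.lt_of_ne hne)).2
  have hiα : Pi.single i 1 ≤ α := by simpa using add_single_le_of_apply_lt hα₀ hi
  have hi_ne : Pi.single i 1 ≠ α := by rintro rfl; simp at hα₃
  obtain ⟨l, hl⟩ := (Pi.lt_def.1 (hiα.lt_of_ne hi_ne)).2
  have hilα : (Pi.single i 1 + Pi.single l 1 : Vec s) ≤ α := add_single_le_of_apply_lt hiα hl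
  have hi₀ : (0 : Vec s) ≤ Pi.single i 1 := Pi.single_nonneg.2 zero_le_one
  have hl₀ : (0 : Vec s) ≤ Pi.single l 1 := Pi.single_nonneg.2 zero_le_one
  have hU : j • α + (α - Pi.single l 1) ∈ G := by
    refine hS.nsmul_add_mem_shiftedGaps hpos hj ?_ (sub_le_self _ hl₀) ?_
    · exact sub_nonneg.2 ((le_add_of_nonneg_left hi₀).trans hilα)
    · simp only [Pi.sub_apply, Finset.sum_sub_distrib, Finset.sum_pi_single', Finset.mem_univ,
        if_true]
      omega
  have hV : Pi.single i 1 + Pi.single l 1 ∈ G := by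
    simpa using hS.nsmul_add_mem_shiftedGaps hpos (j.zero_le.trans_lt hj) (add_nonneg hi₀ hl₀)
      hilα (by rw [sum_add_single]; simp)
  refine ⟨i, Set.mem_add.2 ⟨_, hU, _, hV, ?_⟩⟩
  rw [succ_nsmul]
  abel

lemma MultiplesBelow.covByPath_succ_nsmul (hS : MultiplesBelow S α p) (hpos : ∀ t, 0 < α t)
    (hα₃ : 3 ≤ ∑ t, α t) {q : ℕ} (hq : q ≤ p) : CovByPath (G + G) α ((q + 1) • α) := by
  induction q with
  | zero => rw [zero_add, one_nsmul]; exact .refl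
  | succ q ih =>
    obtain ⟨i, hi⟩ := hS.exists_succ_nsmul_add_single_mem hpos hα₃ hq
    have hmem := hS.succ_nsmul_mem_shiftedGaps hpos (by omega) hq
    rw [succ_nsmul α (q + 1)]
    exact (ih (by omega)).trans (hS.covByPath_add hpos (by omega) hmem hi)

lemma MultiplesBelow.exists_sub_add_single_mem (hS : MultiplesBelow S α (p + 1))
    (hpos : ∀ t, 0 < α t) {y : Vec s} (hy : y ∈ S)
    (hyα : y ∈ Set.Ioo ((p + 1) • α) ((p + 2) • α)) {W : Vec s}
    (hW : Delta (S : Set (Vec s)) (W - 1) = ∅) (hαW : (p + 2) • α ≤ W) :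
    ∃ i, W - α + Pi.single i 1 ∈ G + G := by
  obtain ⟨i, hi⟩ := (Pi.lt_def.1 hyα.2).2
  set z : Vec s := y - (p + 1) • α with hz
  have hz₀ : 0 < z := sub_pos.2 hyα.1
  have hα_eq : (p + 2) • α - (p + 1) • α = α := by rw [succ_nsmul α (p + 1)]; abel
  have hzα : z ≤ α := by simpa only [hα_eq] using sub_le_sub_right hyα.2.le ((p + 1) • α)
  have hzi : z i < α i := by
    rw [← hα_eq]
    exact sub_lt_sub_right hi _
  have hU : p • α + (z + Pi.single i 1) ∈ G := by
    refine hS.nsmul_add_mem_shiftedGaps hpos p.lt_succ_self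
      (hz₀.le.trans (covBy_add_single z i).le) (add_single_le_of_apply_lt hzα hzi) ?_
    have := sum_lt_sum_of_lt hz₀
    simp only [Pi.zero_apply, Finset.sum_const_zero] at this
    rw [sum_add_single]
    omega
  have hV : W - y ∈ G := sub_mem_shiftedGaps hW hy (hyα.2.trans_le hαW)
  refine ⟨i, Set.mem_add.2 ⟨_, hU, _, hV, ?_⟩⟩
  rw [hz, succ_nsmul]
  abel

lemma MultiplesBelow.covByPath_sup (hS : MultiplesBelow S α p) (hpos : ∀ t, 0 < α t) (hp : 0 < p)
    {U V : Vec s} (hU : U ∈ G) (hV : Delta (S : Set (Vec s)) (V - 1) = ∅)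
    (hstep : U + α ≤ V → ∃ i, V + Pi.single i 1 ∈ G + G) :
    CovByPath (G + G) ((U + α) ⊔ V) ((U + α) ⊔ (V + α)) := by
  have hα₀ : 0 ≤ α := fun t => (hpos t).le
  have hUV := sup_mem_shiftedGaps hU hV
  have hle : U ⊔ V ≤ (U + α) ⊔ V := sup_le_sup_right (le_add_of_nonneg_right hα₀) V
  rw [← sup_add]
  rcases hle.eq_or_lt with heq | hlt
  · have hUαV : U + α ≤ V := fun t => by
      have ht := congrFun heq t
      have := hpos t
      simp only [Pi.sup_apply, Pi.add_apply] at ht ⊢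
      omega
    obtain ⟨i, hi⟩ := hstep hUαV
    have hsup : U ⊔ V = V := sup_eq_right.2 ((le_add_of_nonneg_right hα₀).trans hUαV)
    rw [← heq]
    exact hS.covByPath_add hpos hp hUV (by rwa [hsup])
  · refine hS.covByPath_of_lt hpos hp hUV hlt ?_ le_rfl
    rw [sup_add]
    exact sup_le_sup_left (le_add_of_nonneg_right hα₀) _

lemma even_sum_of_Delta_sub_one_eq_empty (hα : α ∈ S) (hpos : ∀ t, 0 < α t)
    (hα₂ : ∑ t, α t = 2) {W : Vec s} (hW₀ : 0 ≤ W)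
    (hW : Delta (S : Set (Vec s)) (W - 1) = ∅) : Even (∑ t, W t) := by
  have hs : s ≤ 2 := by
    have := Finset.sum_le_sum fun t (_ : t ∈ Finset.univ) => Int.add_one_le_of_lt (hpos t)
    simp only [zero_add, Finset.sum_const, Finset.card_univ, Fintype.card_fin, nsmul_eq_mul,
      mul_one, hα₂] at this
    omega
  rw [Delta_sub_one_eq_empty_iff] at hW
  have hmul : ∀ (q : ℕ) i, q * α i = W i - 1 → ∃ j ≠ i, q * α j < W j := fun q i hi => by
    simpa using hW (q • α) (S.nsmul_mem hα q) i (by simpa using hi)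
  interval_cases s
  · simp
  · rw [Fin.sum_univ_one] at hα₂ ⊢
    by_contra hodd
    obtain ⟨k, hk⟩ := Int.not_even_iff_odd.1 hodd
    have hW0 : 0 ≤ W 0 := hW₀ 0
    obtain ⟨j, hj, -⟩ := hmul k.toNat 0 (by rw [hα₂]; omega)
    exact hj (Subsingleton.elim j 0)
  · rw [Fin.sum_univ_two] at hα₂ ⊢
    have hα_one : ∀ i, α i = 1 := by
      have := hpos 0
      have := hpos 1
      exact Fin.forall_fin_two.2 ⟨by omega, by omega⟩
    have hle : ∀ i j, j ≠ i → W i ≤ W j := fun i j hji => by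
      by_contra! hlt
      have hWj : 0 ≤ W j := hW₀ j
      obtain ⟨l, hl, hlW⟩ := hmul (W i - 1).toNat i (by rw [hα_one]; omega)
      obtain rfl : l = j := by omega
      rw [hα_one] at hlW
      omega
    rw [(hle 0 1 (by decide)).antisymm (hle 1 0 (by decide))]
    exact ⟨_, rfl⟩

lemma three_le_sum_of_lt_of_lt_add {β x y : Vec s} (hα : α ∈ S) (hpos : ∀ t, 0 < α t)
    (hx : x ∈ S) (hy : y ∈ S) (hxy : x < y) (hyx : y < x + α)
    (hβ : Delta (S : Set (Vec s)) (β - 1) = ∅) (hyβ : y ≤ β) : 3 ≤ ∑ t, α t := by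
  have hsum_xy := sum_lt_sum_of_lt hxy
  have hsum_yx := sum_lt_sum_of_lt hyx
  simp only [Pi.add_apply, Finset.sum_add_distrib] at hsum_yx
  by_contra! hα₃
  have heven : ∀ c ∈ S, c ≤ β → Even (∑ t, β t - ∑ t, c t) := fun c hc hcβ => by
    rw [← Finset.sum_sub_distrib]
    exact even_sum_of_Delta_sub_one_eq_empty hα hpos (by omega) (sub_nonneg.2 hcβ)
      (Delta_sub_sub_one_eq_empty hβ hc)
  obtain ⟨k, hk⟩ := heven x hx (hxy.le.trans hyβ)
  obtain ⟨l, hl⟩ := heven y hy hyβ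
  omega

theorem MultiplesBelow.covByPath_shiftedGaps_add_shiftedGaps (hS : MultiplesBelow S α (p + 1))
    (hα : α ∈ S) (hpos : ∀ t, 0 < α t) {y β : Vec s} (hy : y ∈ S)
    (hyα : y ∈ Set.Ioo ((p + 1) • α) ((p + 2) • α))
    (hβ : Delta (S : Set (Vec s)) (β - 1) = ∅) (hαβ : (p + 2) • α ≤ β) :
    CovByPath (G + G) α β := by
  have hsucc : (p + 2) • α = (p + 1) • α + α := succ_nsmul α (p + 1)
  have hα₃ : 3 ≤ ∑ t, α t := three_le_sum_of_lt_of_lt_add hα hpos (S.nsmul_mem hα (p + 1)) hy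
    hyα.1 (hsucc ▸ hyα.2) hβ (hyα.2.le.trans hαβ)
  have hU := hS.succ_nsmul_mem_shiftedGaps hpos (by omega) p.lt_succ_self
  have hdescend : ∀ k : ℕ, CovByPath (G + G) ((p + 2) • α ⊔ (β - k • α)) β := fun k => by
    induction k with
    | zero => rw [zero_nsmul, sub_zero, sup_eq_right.2 hαβ]; exact .refl
    | succ k ih =>
      have hV : β - (k + 1) • α = β - k • α - α := by rw [succ_nsmul]; abel
      have hW := Delta_sub_sub_one_eq_empty hβ (S.nsmul_mem hα k)
      have hpath := hS.covByPath_sup hpos p.succ_pos hU (Delta_sub_sub_one_eq_empty hW hα)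
        fun hle => hS.exists_sub_add_single_mem hpos hy hyα hW <|
          hsucc ▸ hle.trans (sub_le_self _ fun t => (hpos t).le)
      rw [sub_add_cancel, ← hsucc, ← hV] at hpath
      exact hpath.trans ih
  obtain ⟨k, hk⟩ := exists_le_nsmul hpos β
  have hbottom : (p + 2) • α ⊔ (β - k • α) = (p + 2) • α :=
    sup_eq_left.2 ((sub_nonpos.2 hk).trans (nsmul_nonneg (fun t => (hpos t).le) _))
  exact (hS.covByPath_succ_nsmul hpos hα₃ le_rfl).trans (hbottom ▸ hdescend k)

end Boxes

lemma Ici_subset_iff_forall_add_mem {s : ℕ} {S : Set (Vec s)} {c : Vec s} :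
    Set.Ici c ⊆ S ↔ ∀ x, 0 ≤ x → c + x ∈ S := by
  refine ⟨fun h x hx => h (le_add_of_nonneg_right hx), fun h a ha => ?_⟩
  simpa using h (a - c) (sub_nonneg.2 ha)

namespace GoodLocal

variable {s : ℕ} {S : Set (Vec s)} {β : Vec s}

/-- A good local semigroup as a submonoid of `ℤ^s`. -/
def toAddSubmonoid (hS : GoodLocal S) : AddSubmonoid (Vec s) where
  carrier := S
  zero_mem' := hS.2.1
  add_mem' ha hb := hS.2.2.1 _ ha _ hb

lemma infClosed (hS : GoodLocal S) : InfClosed S :=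
  fun a ha b hb => hS.2.2.2.1 a ha b hb

lemma apply_pos (hS : GoodLocal S) {a : Vec s} (ha : a ∈ S) (hne : a ≠ 0) (t : Fin s) :
    0 < a t := by
  obtain ⟨hnonneg, -, -, -, -, -, hlocal⟩ := hS
  exact (hnonneg a ha t).lt_of_ne fun h => hne (hlocal a ha ⟨t, h.symm⟩)

lemma exists_lt_apply (hS : GoodLocal S) (hβ : Set.Ici β ⊆ S) {b : Vec s} (hb : b ∈ S)
    {i j : Fin s} (hji : j ≠ i) (hbi : b i < β i) (hbβ : ∀ t ≠ i, β t ≤ b t) :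
    ∃ b' ∈ S, b ≤ b' ∧ b' i = b i ∧ b j < b' j := by
  obtain ⟨-, -, -, -, hG2, -, -⟩ := hS
  have hsup_j : (b ⊔ β) j = b j := max_eq_left (hbβ j hji)
  have hsup_i : (b ⊔ β) i = β i := max_eq_right hbi.le
  obtain ⟨ε, hε, hεj, hε_min⟩ := hG2 b hb (b ⊔ β) (hβ (Set.mem_Ici.2 le_sup_right)) j hsup_j.symm
  refine ⟨ε, hε, fun t => ?_, ?_, hεj⟩
  · rcases eq_or_ne t j with rfl | htj
    · exact hεj.le
    · simpa using (hε_min t htj).1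
  · rw [(hε_min i hji.symm).2 (by omega), hsup_i, min_eq_left hbi.le]

lemma exists_le_apply (hS : GoodLocal S) (hβ : Set.Ici β ⊆ S) {b : Vec s} (hb : b ∈ S)
    {i : Fin s} (hbi : b i < β i) (hbβ : ∀ t ≠ i, β t ≤ b t) (c : Vec s) :
    ∃ b' ∈ S, b' i = b i ∧ ∀ t ≠ i, c t ≤ b' t := by
  induction hk : ∑ t, (c t - b t).toNat using Nat.strong_induction_on generalizing b with
  | _ k ih =>
    by_cases hcb : ∀ t ≠ i, c t ≤ b t
    · exact ⟨b, hb, rfl, hcb⟩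
    push Not at hcb
    obtain ⟨j, hji, hj⟩ := hcb
    obtain ⟨b₁, hb₁, hle, hi, hlt⟩ := hS.exists_lt_apply hβ hb hji hbi hbβ
    have hdecr : ∑ t, (c t - b₁ t).toNat < k := by
      rw [← hk]
      refine Finset.sum_lt_sum (fun t _ => ?_) ⟨j, Finset.mem_univ j, by omega⟩
      exact Int.toNat_le_toNat (sub_le_sub_left (hle t) _)
    obtain ⟨b', hb', hb'i, hb'c⟩ :=
      ih _ hdecr hb₁ (hi ▸ hbi) (fun t ht => (hbβ t ht).trans (hle t)) rfl
    exact ⟨b', hb', hb'i.trans hi, hb'c⟩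

lemma Ici_sub_single_subset (hS : GoodLocal S) (hβ : Set.Ici β ⊆ S) {b : Vec s} (hb : b ∈ S)
    {i : Fin s} (hbi : b i = β i - 1) (hbβ : ∀ t ≠ i, β t ≤ b t) :
    Set.Ici (β - Pi.single i 1) ⊆ S := by
  intro x hx
  have hxβ : β ≤ x + Pi.single i 1 := sub_le_iff_le_add.1 hx
  by_cases hβx : β ≤ x
  · exact hβ hβx
  obtain ⟨b', hb', hb'i, hxb'⟩ := hS.exists_le_apply hβ hb (by omega) hbβ x
  have hxi : x i = b i := by
    have hle : β i ≤ x i + 1 := by simpa using hxβ i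
    by_contra hne
    refine hβx (Pi.le_def.2 fun t => ?_)
    rcases eq_or_ne t i with rfl | hti
    · omega
    · simpa [hti] using hxβ t
  have hx_inf : b' ⊓ (x + Pi.single i 1) = x := by
    ext t
    rcases eq_or_ne t i with rfl | hti
    · simp [hb'i, hxi]
    · simpa [hti] using hxb' t hti
  exact hx_inf ▸ hS.infClosed hb' (hβ hxβ)

lemma Delta_conductor_sub_one_eq_empty (hS : GoodLocal S)
    (hβ : IsLeast {c : Vec s | 0 ≤ c ∧ Set.Ici c ⊆ S} β) : Delta S (β - 1) = ∅ := by
  refine Delta_sub_one_eq_empty_iff.2 fun b hb i hi => ?_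
  by_contra! hbβ
  obtain ⟨⟨hβ₀, hβS⟩, hβ_min⟩ := hβ
  have hnonneg : 0 ≤ β - Pi.single i 1 := fun t => by
    rcases eq_or_ne t i with rfl | hti
    · simpa [← hi] using hS.1 b hb t
    · simpa [hti] using hβ₀ t
  have hle : β ≤ β - Pi.single i 1 := hβ_min ⟨hnonneg, hS.Ici_sub_single_subset hβS hb hi hbβ⟩
  simpa using hle i

end GoodLocal

lemma mem_Rset_natCast_add_one_iff {s q : ℕ} {α a : Vec s} :
    a ∈ Rset α (q + 1) ↔ 0 ≤ a ∧ a ∈ Set.Ioo (q • α) ((q + 1) • α) := by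
  have hq : ((q : ℤ) + 1) • α = (q + 1) • α := by rw [← natCast_zsmul]; norm_cast
  simp [Rset, hq]

/-- There is a strictly increasing sequence `β = a₁ < a₂ < … < a_N < 2β - α`
with `N = |β - α|` and every `aᵢ ∈ K° + K°`. -/
theorem max_noether_full_seq
    (s : ℕ) (hs : 1 ≤ s) (S : Set (Vec s)) (hS : GoodLocal S)
    (hSne : S ≠ {a : Vec s | 0 ≤ a}) (α β : Vec s)
    (hα₁ : α ∈ S) (hα₂ : α ≠ 0) (hα₃ : ∀ a ∈ S, a ≠ 0 → α ≤ a)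
    (hβ₁ : 0 ≤ β) (hβ₂ : ∀ x : Vec s, 0 ≤ x → β + x ∈ S)
    (hβ₃ : ∀ c : Vec s, 0 ≤ c → (∀ x : Vec s, 0 ≤ x → c + x ∈ S) → β ≤ c)
    (m : ℤ) (hm₁ : (m + 1) • α ≤ β) (hm₂ : ∀ m' : ℤ, (m' + 1) • α ≤ β → m' ≤ m)
    (n : ℤ) (hn₁ : 1 ≤ n) (hn₂ : (Rset α n ∩ S).Nonempty)
    (hn₃ : ∀ n' : ℤ, 1 ≤ n' → (Rset α n' ∩ S).Nonempty → n ≤ n')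
    (hnm : n ≤ m + 1) :
    1 ≤ ∑ t, (β t - α t) ∧
    ∃ a : ℕ → Vec s, a 1 = β ∧
      (∀ i j : ℕ, 1 ≤ i → i < j → (j : ℤ) ≤ ∑ t, (β t - α t) → a i < a j) ∧
      ∀ i : ℕ, 1 ≤ i → (i : ℤ) ≤ ∑ t, (β t - α t) →
        a i ∈ Kcirc S β + Kcirc S β ∧ a i < (2 : ℤ) • β - α := by
  have hpos := hS.apply_pos hα₁ hα₂
  have hα₀ : 0 ≤ α := fun t => (hpos t).le
  obtain ⟨y, hyR, hyS⟩ := hn₂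
  have hy₀ : 0 < y := (smul_nonneg (by omega) hα₀).trans_lt hyR.2.1
  have hαy : α ≤ y := hα₃ y hyS hy₀.ne'
  have hn_ne : n ≠ 1 := by
    rintro rfl
    exact hαy.not_gt (by simpa using hyR.2.2)
  obtain ⟨p, rfl⟩ : ∃ p : ℕ, n = (p + 1 : ℕ) + 1 := ⟨(n - 2).toNat, by omega⟩
  have hyα := (mem_Rset_natCast_add_one_iff.1 hyR).2
  have hαβ : (p + 2) • α ≤ β := by
    rw [← natCast_zsmul]
    exact (smul_le_smul_of_nonneg_right (by push_cast at hnm ⊢; omega) hα₀).trans hm₁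
  have hmul : MultiplesBelow hS.toAddSubmonoid α (p + 1) :=
    multiplesBelow_of_forall_notMem_Ioo hS.1 hS.infClosed hα₁ hpos fun q hq b hb hbq => by
      have hbR : b ∈ Rset α (q + 1) := mem_Rset_natCast_add_one_iff.2 ⟨hS.1 b hb, hbq⟩
      have := hn₃ (q + 1) (by omega) ⟨b, hbR, hb⟩
      omega
  have hβ := hS.Delta_conductor_sub_one_eq_empty ⟨⟨hβ₁, Ici_subset_iff_forall_add_mem.2 hβ₂⟩,
    fun c hc => hβ₃ c hc.1 (Ici_subset_iff_forall_add_mem.1 hc.2)⟩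
  have hsum := sum_lt_sum_of_lt (hαy.trans_lt (hyα.2.trans_le hαβ))
  refine ⟨by rw [Finset.sum_sub_distrib]; omega, CovByPath.exists_seq_Kcirc_add_Kcirc ?_⟩
  exact hmul.covByPath_shiftedGaps_add_shiftedGaps hα₁ hpos hyS hyα hβ hαβ
end
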